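/- Let p : ℝ² → ℝ be given by p(x) := |x|. Then for every set A ⊂ ℝ², the outer Lebesgue measure of the image satisfies L¹(p(A)) ≤ 10 capa₁(A). -/

import Mathlib

/-!
Let `u ∈ W^{1,1}(ℝ²)` with `u ≥ 1` on an open set `U ⊇ A`.

*Reduction to `C¹` functions.* Convolving `u` with a bump function of radius `δ` gives a `C¹`
function `w` whose gradient is the convolution of the weak gradient, so that the `L¹` norms do not
grow (up to a factor `2`, which comes from estimating the gradient coordinatewise), and `w ≥ 1` at
every point whose `δ`-ball lies in `U` (`exists_mollified`). These points exhaust `U` as `δ → 0`,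
and outer measure is continuous along increasing unions.

*The `C¹` estimate* (`volume_norm_image_le_of_contDiff`). Let `w ≥ 1` on `S`, and let
`M = ∫ |w| + |∇w|`. A radius `r ∈ p(S)` is of one of two kinds.
* Somewhere on the circle of radius `r` one has `w < 1/2`. Since `w ≥ 1` elsewhere on this circle,
  the integral of `|∇w|` along it is at least `1/2` (`half_le_of_angle`). By Markov's inequality
  such radii have measure at most `2 M`.
* `w ≥ 1/2` on the whole circle. Along every ray `|w(r)| ≤ ∫_r^∞ (|w| + |∂_r w|) ds`
  (`le_add_of_radius`); multiplying by `r ≤ s` and integrating over the angle gives `π r ≤ M`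
  (`radius_le_of_half_le`). Such radii lie in `[0, M]`.

Hence `L¹(p(S)) ≤ 3 M`, and the factor `2` from the mollification yields `6 ≤ 10`.
-/

open MeasureTheory
open scoped ENNReal NNReal

noncomputable section

/-- `u ∈ W^{1,1}(ℝ²)` with weak (distributional) gradient `V`: both are integrable and the
integration-by-parts formula holds against all `C_c¹` test functions. -/
def IsW11 (u : EuclideanSpace ℝ (Fin 2) → ℝ) (V : EuclideanSpace ℝ (Fin 2) → EuclideanSpace ℝ (Fin 2)) : Prop :=
  Integrable u volume ∧ Integrable V volume ∧
    ∀ φ : EuclideanSpace ℝ (Fin 2) → ℝ, ContDiff ℝ 1 φ → HasCompactSupport φ →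
      ∀ l : Fin 2,
        ∫ x, u x * fderiv ℝ φ x (EuclideanSpace.single l (1:ℝ)) ∂volume
          = - ∫ x, φ x * V x l ∂volume

/-- The (Sobolev) 1-capacity: `capa₁(A) = inf ‖u‖_{W^{1,1}(ℝ²)}`, the infimum of
`∫|u| + ∫|∇u|` over all `u ∈ W^{1,1}(ℝ²)` with `u ≥ 1` in a neighborhood of `A`. -/
def capa1 (A : Set (EuclideanSpace ℝ (Fin 2))) : ℝ≥0∞ :=
  ⨅ (u : EuclideanSpace ℝ (Fin 2) → ℝ) (V : EuclideanSpace ℝ (Fin 2) → EuclideanSpace ℝ (Fin 2))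
    (_ : IsW11 u V)
    (_ : ∃ U : Set (EuclideanSpace ℝ (Fin 2)), IsOpen U ∧ A ⊆ U ∧ ∀ x ∈ U, 1 ≤ u x),
    (∫⁻ x, (‖u x‖₊ : ℝ≥0∞) ∂volume) + ∫⁻ x, (‖V x‖₊ : ℝ≥0∞) ∂volume

theorem enorm_sub_le_lintegral_deriv {f f' : ℝ → ℝ} (h : ∀ x, HasDerivAt f (f' x) x)
    (hf' : Continuous f') {a b : ℝ} {S : Set ℝ} (hS : Set.uIoc a b ⊆ S) :
    ‖f b - f a‖ₑ ≤ ∫⁻ x in S, ‖f' x‖ₑ := by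
  rw [← intervalIntegral.integral_eq_sub_of_hasDerivAt (fun x _ => h x)
    (hf'.intervalIntegrable a b)]
  rw [← ofReal_norm, intervalIntegral.norm_intervalIntegral_eq, ofReal_norm]
  exact (enorm_integral_le_lintegral_enorm _).trans (lintegral_mono_set hS)

/-- The point `r e^{iθ}` of `ℂ` with polar coordinates `(r, θ)`; `r` may be any real number. -/
def polarPt (r θ : ℝ) : ℂ := r * Complex.exp (θ * Complex.I)

theorem polarPt_eq (p : ℝ × ℝ) : Complex.polarCoord.symm p = polarPt p.1 p.2 := by
  simp [polarPt, Complex.exp_mul_I]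

theorem polarPt_norm_arg (z : ℂ) : polarPt ‖z‖ z.arg = z := Complex.norm_mul_exp_arg_mul_I z

theorem continuous_polarPt : Continuous fun p : ℝ × ℝ => polarPt p.1 p.2 := by
  unfold polarPt; fun_prop

theorem hasDerivAt_polarPt_radius (r θ : ℝ) :
    HasDerivAt (fun s => polarPt s θ) (Complex.exp (θ * Complex.I)) r := by
  simpa [polarPt] using (Complex.ofRealCLM.hasDerivAt (x := r)).mul_const
    (Complex.exp (θ * Complex.I))

theorem hasDerivAt_polarPt_angle (r θ : ℝ) :
    HasDerivAt (fun t => polarPt r t) (r * (Complex.exp (θ * Complex.I) * Complex.I)) θ := by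
  simpa [polarPt] using
    (((Complex.ofRealCLM.hasDerivAt (x := θ)).mul_const Complex.I).cexp).const_mul (r : ℂ)

theorem lintegral_polar (F : ℂ → ℝ≥0∞) (hF : Measurable F) :
    ∫⁻ z, F z = ∫⁻ r in Set.Ioi (0 : ℝ), ∫⁻ θ in Set.Ioo (-Real.pi) Real.pi,
      ENNReal.ofReal r * F (polarPt r θ) := by
  rw [← Complex.lintegral_comp_polarCoord_symm, polarCoord_target,
    Measure.volume_eq_prod, ← Measure.prod_restrict, lintegral_prod]
  · simp only [polarPt_eq, smul_eq_mul]
  · simp only [polarPt_eq, smul_eq_mul]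
    exact ((ENNReal.measurable_ofReal.comp measurable_fst).mul
      (hF.comp continuous_polarPt.measurable)).aemeasurable

/-- A trace estimate along a ray: for `s ∈ (r, r + 1]`, `|w|` at radius `r` is at most `|w|` at
radius `s` plus the integral of the gradient over the ray; average over such `s`. -/
theorem le_add_of_radius {w : ℂ → ℝ} (hw : ContDiff ℝ 1 w) (r θ : ℝ) :
    ‖w (polarPt r θ)‖ₑ ≤ ∫⁻ s in Set.Ioi r, (‖w (polarPt s θ)‖ₑ + ‖fderiv ℝ w (polarPt s θ)‖ₑ) := by
  have hp : Continuous fun s : ℝ => polarPt s θ :=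
    continuous_polarPt.comp (by fun_prop : Continuous fun s : ℝ => (s, θ))
  have hd : ∀ s, HasDerivAt (fun s => w (polarPt s θ))
      (fderiv ℝ w (polarPt s θ) (Complex.exp (θ * Complex.I))) s := fun s =>
    ((hw.differentiable one_ne_zero) _).hasFDerivAt.comp_hasDerivAt s
      (hasDerivAt_polarPt_radius s θ)
  have hc : Continuous fun s : ℝ => fderiv ℝ w (polarPt s θ) (Complex.exp (θ * Complex.I)) :=
    ((hw.continuous_fderiv one_ne_zero).comp hp).clm_apply continuous_const
  have hm : Measurable fun s => ‖w (polarPt s θ)‖ₑ := (hw.continuous.comp hp).measurable.enorm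
  set D := ∫⁻ s in Set.Ioi r, ‖fderiv ℝ w (polarPt s θ)‖ₑ with hD
  have step : ∀ s ∈ Set.Ioc r (r + 1), ‖w (polarPt r θ)‖ₑ ≤ ‖w (polarPt s θ)‖ₑ + D := by
    intro s hs
    have key := enorm_sub_le_lintegral_deriv hd hc (a := s) (b := r) (S := Set.Ioi r) (by
      rw [Set.uIoc_of_ge hs.1.le]; exact Set.Ioc_subset_Ioi_self)
    calc ‖w (polarPt r θ)‖ₑ = ‖w (polarPt s θ) + (w (polarPt r θ) - w (polarPt s θ))‖ₑ := by
          congr 1; ring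
      _ ≤ ‖w (polarPt s θ)‖ₑ + ‖w (polarPt r θ) - w (polarPt s θ)‖ₑ := enorm_add_le _ _
      _ ≤ _ := by
        gcongr
        refine key.trans (lintegral_mono fun t => ?_)
        refine (ContinuousLinearMap.le_opENorm _ _).trans ?_
        rw [← ofReal_norm (Complex.exp _), Complex.norm_exp_ofReal_mul_I]
        simp
  calc ‖w (polarPt r θ)‖ₑ = ∫⁻ s in Set.Ioc r (r + 1), ‖w (polarPt r θ)‖ₑ := by simp
    _ ≤ ∫⁻ s in Set.Ioc r (r + 1), (‖w (polarPt s θ)‖ₑ + D) :=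
      setLIntegral_mono (hm.add measurable_const) step
    _ = (∫⁻ s in Set.Ioc r (r + 1), ‖w (polarPt s θ)‖ₑ) + D := by
      rw [lintegral_add_left hm]; simp
    _ ≤ (∫⁻ s in Set.Ioi r, ‖w (polarPt s θ)‖ₑ) + D := by
      gcongr; exact Set.Ioc_subset_Ioi_self
    _ = _ := by rw [hD, lintegral_add_left hm]

/-- If `w` takes values `≤ 1 / 2` and `≥ 1` on a circle, then the integral of `|∇w|` along the
circle is at least `1 / 2`. -/
theorem half_le_of_angle {w : ℂ → ℝ} (hw : ContDiff ℝ 1 w) {r θ₀ θ₁ : ℝ} (hr : 0 ≤ r)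
    (h₀ : θ₀ ∈ Set.Icc (-Real.pi) Real.pi) (h₁ : θ₁ ∈ Set.Icc (-Real.pi) Real.pi)
    (hw₀ : w (polarPt r θ₀) ≤ 1 / 2) (hw₁ : 1 ≤ w (polarPt r θ₁)) :
    ENNReal.ofReal (1 / 2) ≤ ∫⁻ θ in Set.Ioo (-Real.pi) Real.pi,
      ENNReal.ofReal r * ‖fderiv ℝ w (polarPt r θ)‖ₑ := by
  have hd : ∀ t, HasDerivAt (fun t => w (polarPt r t))
      (fderiv ℝ w (polarPt r t) (r * (Complex.exp (t * Complex.I) * Complex.I))) t := fun t =>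
    ((hw.differentiable one_ne_zero) _).hasFDerivAt.comp_hasDerivAt t
      (hasDerivAt_polarPt_angle r t)
  have hc : Continuous fun t : ℝ =>
      fderiv ℝ w (polarPt r t) (r * (Complex.exp (t * Complex.I) * Complex.I)) :=
    ((hw.continuous_fderiv one_ne_zero).comp
      (continuous_polarPt.comp (by fun_prop : Continuous fun t : ℝ => (r, t)))).clm_apply
      (by fun_prop)
  have hS : Set.uIoc θ₀ θ₁ ⊆ Set.Ioc (-Real.pi) Real.pi := by
    rw [Set.uIoc]
    exact Set.Ioc_subset_Ioc (le_min h₀.1 h₁.1) (max_le h₀.2 h₁.2)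
  have key := enorm_sub_le_lintegral_deriv hd hc hS
  rw [setLIntegral_congr Ioo_ae_eq_Ioc]
  refine (ENNReal.ofReal_le_ofReal (?_ : _ ≤ ‖w (polarPt r θ₁) - w (polarPt r θ₀)‖)).trans
    ((ofReal_norm _).le.trans (key.trans ?_))
  · exact le_trans (by linarith) (le_abs_self _)
  refine lintegral_mono fun t => ?_
  refine (ContinuousLinearMap.le_opENorm _ _).trans ?_
  rw [mul_comm]
  refine mul_le_mul_left ?_ _ 
  rw [← ofReal_norm]
  refine ENNReal.ofReal_le_ofReal ?_
  simp [Complex.norm_exp_ofReal_mul_I, abs_of_nonneg hr]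

/-- A circle on which `w ≥ 1 / 2` everywhere has radius at most `‖w‖_{W^{1,1}}`: integrate
`le_add_of_radius` over all directions, the Jacobian of polar coordinates being at least `r`
outside the disc of radius `r`. -/
theorem radius_le_of_half_le {w : ℂ → ℝ} (hw : ContDiff ℝ 1 w) {r : ℝ} (hr : 0 < r)
    (hθ : ∀ θ ∈ Set.Ioo (-Real.pi) Real.pi, 1 / 2 ≤ w (polarPt r θ)) :
    ENNReal.ofReal r ≤ ∫⁻ z, (‖w z‖ₑ + ‖fderiv ℝ w z‖ₑ) := by
  have hFm : Measurable fun z => ‖w z‖ₑ + ‖fderiv ℝ w z‖ₑ :=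
    hw.continuous.measurable.enorm.add (hw.continuous_fderiv one_ne_zero).measurable.enorm
  have hrad := le_add_of_radius hw r
  generalize hF : (fun z => ‖w z‖ₑ + ‖fderiv ℝ w z‖ₑ) = F at hFm ⊢
  have hrad : ∀ θ, ‖w (polarPt r θ)‖ₑ ≤ ∫⁻ s in Set.Ioi r, F (polarPt s θ) := by
    subst hF; exact hrad
  have hFp : Measurable fun p : ℝ × ℝ => F (polarPt p.1 p.2) :=
    hFm.comp continuous_polarPt.measurable
  have hGm : Measurable fun p : ℝ × ℝ => ENNReal.ofReal p.1 * F (polarPt p.1 p.2) :=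
    (ENNReal.measurable_ofReal.comp measurable_fst).mul hFp
  have hpt : ∀ θ ∈ Set.Ioo (-Real.pi) Real.pi, ENNReal.ofReal (r * (1 / 2)) ≤
      ∫⁻ s in Set.Ioi (0 : ℝ), ENNReal.ofReal s * F (polarPt s θ) := by
    intro θ h
    have hFθ : Measurable fun s : ℝ => F (polarPt s θ) :=
      hFp.comp (measurable_id.prodMk measurable_const)
    calc ENNReal.ofReal (r * (1 / 2)) ≤ ENNReal.ofReal r * ‖w (polarPt r θ)‖ₑ := by
          rw [ENNReal.ofReal_mul hr.le, ← ofReal_norm]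
          gcongr
          exact (hθ θ h).trans (le_abs_self _)
      _ ≤ ENNReal.ofReal r * ∫⁻ s in Set.Ioi r, F (polarPt s θ) := by
          gcongr; exact hrad θ
      _ = ∫⁻ s in Set.Ioi r, ENNReal.ofReal r * F (polarPt s θ) := by
          rw [lintegral_const_mul _ hFθ]
      _ ≤ ∫⁻ s in Set.Ioi r, ENNReal.ofReal s * F (polarPt s θ) :=
          setLIntegral_mono (ENNReal.measurable_ofReal.mul hFθ) fun s hs =>
            mul_le_mul_left (ENNReal.ofReal_le_ofReal (le_of_lt hs)) _
      _ ≤ _ := lintegral_mono_set (Set.Ioi_subset_Ioi hr.le)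
  calc ENNReal.ofReal r ≤ ENNReal.ofReal (r * (1 / 2)) * ENNReal.ofReal (2 * Real.pi) := by
        rw [← ENNReal.ofReal_mul (by positivity)]
        apply ENNReal.ofReal_le_ofReal
        nlinarith [Real.pi_gt_three]
    _ = ∫⁻ θ in Set.Ioo (-Real.pi) Real.pi, ENNReal.ofReal (r * (1 / 2)) := by
        rw [setLIntegral_const, Real.volume_Ioo]; congr 2; ring
    _ ≤ ∫⁻ θ in Set.Ioo (-Real.pi) Real.pi, ∫⁻ s in Set.Ioi (0 : ℝ),
          ENNReal.ofReal s * F (polarPt s θ) :=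
        setLIntegral_mono' measurableSet_Ioo hpt
    _ = ∫⁻ z, F z := by
        rw [lintegral_polar F hFm]
        exact lintegral_lintegral_swap (hGm.comp measurable_swap).aemeasurable

/-- The estimate for `C¹` functions, on `ℂ`, where polar coordinates are available. -/
theorem volume_norm_image_le_of_contDiff {w : ℂ → ℝ} (hw : ContDiff ℝ 1 w) {S : Set ℂ}
    (hS : ∀ z ∈ S, 1 ≤ w z) :
    volume ((fun z : ℂ => ‖z‖) '' S) ≤ 3 * ∫⁻ z, (‖w z‖ₑ + ‖fderiv ℝ w z‖ₑ) := by
  set F : ℂ → ℝ≥0∞ := fun z => ‖w z‖ₑ + ‖fderiv ℝ w z‖ₑ with hF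
  have hFm : Measurable F :=
    hw.continuous.measurable.enorm.add (hw.continuous_fderiv one_ne_zero).measurable.enorm
  have hFp : Measurable fun p : ℝ × ℝ => F (polarPt p.1 p.2) :=
    hFm.comp continuous_polarPt.measurable
  have hGm : Measurable fun p : ℝ × ℝ => ENNReal.ofReal p.1 * F (polarPt p.1 p.2) :=
    (ENNReal.measurable_ofReal.comp measurable_fst).mul hFp
  have hpol := lintegral_polar F hFm
  set M := ∫⁻ z, F z with hM
  set H : ℝ → ℝ≥0∞ := fun r => ∫⁻ θ in Set.Ioo (-Real.pi) Real.pi,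
    ENNReal.ofReal r * F (polarPt r θ) with hH
  have hHm : Measurable H := hGm.lintegral_prod_right'
  rcases eq_or_ne M ∞ with hMtop | hMtop
  · rw [hMtop]; simp
  -- Markov's inequality for the radii whose circle carries at least `1 / 2` of the integral.
  have hgood : volume ({r | ENNReal.ofReal (1 / 2) ≤ H r} ∩ Set.Ioi 0) ≤ 2 * M := by
    have := mul_meas_ge_le_lintegral (μ := volume.restrict (Set.Ioi (0 : ℝ))) hHm
      (ENNReal.ofReal (1 / 2))
    rw [← hpol, Measure.restrict_apply (measurableSet_le measurable_const hHm)] at this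
    calc volume ({r | ENNReal.ofReal (1 / 2) ≤ H r} ∩ Set.Ioi 0)
        = 2 * (ENNReal.ofReal (1 / 2) * volume ({r | ENNReal.ofReal (1 / 2) ≤ H r} ∩ Set.Ioi 0)) := by
          rw [← mul_assoc, ← ENNReal.ofReal_ofNat, ← ENNReal.ofReal_mul (by norm_num)]
          norm_num
      _ ≤ _ := by gcongr
  have hsub : (fun z : ℂ => ‖z‖) '' S ⊆
      Set.Icc 0 M.toReal ∪ ({r | ENNReal.ofReal (1 / 2) ≤ H r} ∩ Set.Ioi 0) := by
    rintro _ ⟨z, hz, rfl⟩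
    dsimp only
    rcases eq_or_ne z 0 with rfl | hz0
    · left; simp
    have hr : 0 < ‖z‖ := norm_pos_iff.2 hz0
    by_cases hall : ∀ θ ∈ Set.Ioo (-Real.pi) Real.pi, 1 / 2 ≤ w (polarPt ‖z‖ θ)
    · left
      exact ⟨hr.le, (ENNReal.ofReal_le_iff_le_toReal hMtop).1 (radius_le_of_half_le hw hr hall)⟩
    · right
      push Not at hall
      obtain ⟨θ, hθ, hlt⟩ := hall
      refine ⟨?_, hr⟩
      refine (half_le_of_angle hw hr.le (Set.Ioo_subset_Icc_self hθ)
        ⟨(Complex.neg_pi_lt_arg z).le, Complex.arg_le_pi z⟩ hlt.le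
        (by rw [polarPt_norm_arg]; exact hS z hz)).trans ?_
      refine lintegral_mono fun t => ?_
      gcongr
      exact le_add_self
  calc volume ((fun z : ℂ => ‖z‖) '' S)
      ≤ volume (Set.Icc 0 M.toReal) + volume ({r | ENNReal.ofReal (1 / 2) ≤ H r} ∩ Set.Ioi 0) :=
        (measure_mono hsub).trans (measure_union_le _ _)
    _ ≤ M + 2 * M := by
        gcongr
        simp [ENNReal.ofReal_toReal hMtop]
    _ = 3 * M := by ring

/-- The plane `ℝ²` with its Euclidean norm. -/
local notation "E2" => EuclideanSpace ℝ (Fin 2)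

/-- `volume_norm_image_le_of_contDiff` transported along the isometry `ℂ ≃ ℝ²`. -/
theorem volume_norm_image_le_of_contDiff_euclidean {w : E2 → ℝ} (hw : ContDiff ℝ 1 w) {S : Set E2}
    (hS : ∀ x ∈ S, 1 ≤ w x) :
    volume ((fun x : E2 => ‖x‖) '' S) ≤ 3 * ∫⁻ x, (‖w x‖ₑ + ‖fderiv ℝ w x‖ₑ) := by
  set T := Complex.orthonormalBasisOneI.repr with hT
  have hmp : MeasurePreserving T volume volume :=
    Complex.orthonormalBasisOneI.measurePreserving_repr
  have himg : (fun x : E2 => ‖x‖) '' S = (fun z : ℂ => ‖z‖) '' (T ⁻¹' S) := by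
    ext r
    constructor
    · rintro ⟨x, hx, rfl⟩
      exact ⟨T.symm x, by simpa using hx, by simp⟩
    · rintro ⟨z, hz, rfl⟩
      exact ⟨T z, hz, by simp⟩
  have hwT : ContDiff ℝ 1 (w ∘ T) := hw.comp T.contDiff
  have hcont : Measurable fun x => ‖w x‖ₑ + ‖fderiv ℝ w x‖ₑ :=
    hw.continuous.measurable.enorm.add (hw.continuous_fderiv one_ne_zero).measurable.enorm
  rw [himg, ← hmp.lintegral_comp hcont]
  refine (volume_norm_image_le_of_contDiff hwT fun z hz => hS _ hz).trans ?_
  gcongr with z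
  · rfl
  · have h := (((hw.differentiable one_ne_zero) (T z)).hasFDerivAt.comp z
      (T.toContinuousLinearEquiv.hasFDerivAt)).fderiv
    rw [show fderiv ℝ (w ∘ T) z = _ from h]
    refine enorm_le_iff_norm_le.2 ?_
    refine ContinuousLinearMap.opNorm_le_bound _ (norm_nonneg _) fun v => ?_
    refine ((fderiv ℝ w (T z)).le_opNorm _).trans ?_
    simp

/-- Averaging against translates of a probability density does not increase `L¹` norms. -/
theorem lintegral_lintegral_mollify {ψ : E2 → ℝ} (hψ : Continuous ψ)
    (hψ1 : ∫⁻ x, ‖ψ x‖ₑ = 1) {g : E2 → ℝ≥0∞} (hg : AEMeasurable g volume) :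
    ∫⁻ x, ∫⁻ y, g y * ‖ψ (x - y)‖ₑ = ∫⁻ y, g y := by
  rw [lintegral_lintegral_swap]
  · refine lintegral_congr fun y => ?_
    have hm : Measurable fun x => ‖ψ (x - y)‖ₑ :=
      (hψ.comp (continuous_sub_right y)).measurable.enorm
    rw [lintegral_const_mul _ hm, lintegral_sub_right_eq_self (fun x => ‖ψ x‖ₑ) y,
      hψ1, mul_one]
  · refine AEMeasurable.mul ?_ ?_
    · exact hg.comp_snd
    · exact (hψ.comp continuous_sub).measurable.enorm.aemeasurable

theorem enorm_clm_le_sum (L : E2 →L[ℝ] ℝ) :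
    ‖L‖ₑ ≤ ∑ l : Fin 2, ‖L (EuclideanSpace.single l 1)‖ₑ := by
  have h : ‖L‖ ≤ ∑ l : Fin 2, ‖L (EuclideanSpace.single l 1)‖ := by
    refine L.opNorm_le_bound (by positivity) fun v => ?_
    have hv : v = ∑ l : Fin 2, v l • EuclideanSpace.single l (1 : ℝ) := by
      ext i; fin_cases i <;> simp
    conv_lhs => rw [hv]
    rw [map_sum, Finset.sum_mul]
    refine (norm_sum_le _ _).trans (Finset.sum_le_sum fun l _ => ?_)
    rw [map_smul, norm_smul, mul_comm]
    gcongr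
    exact PiLp.norm_apply_le v l
  have := ENNReal.ofReal_le_ofReal h
  rw [ENNReal.ofReal_sum_of_nonneg (fun _ _ => norm_nonneg _)] at this
  simpa only [ofReal_norm] using this

open scoped Convolution in
/-- Mollification at scale `δ`. The weak derivative identity, tested against `y ↦ ψ (x - y)`,
shows that the gradient of `u ⋆ ψ` is `V ⋆ ψ`. -/
theorem exists_mollified {u : E2 → ℝ} {V : E2 → E2} (h : IsW11 u V) {U : Set E2}
    (hU : ∀ x ∈ U, 1 ≤ u x) {δ : ℝ} (hδ : 0 < δ) :
    ∃ w : E2 → ℝ, ContDiff ℝ 1 w ∧ (∀ x, Metric.ball x δ ⊆ U → 1 ≤ w x) ∧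
      ∫⁻ x, ‖w x‖ₑ ≤ ∫⁻ x, ‖u x‖ₑ ∧
      ∫⁻ x, ‖fderiv ℝ w x‖ₑ ≤ 2 * ∫⁻ x, ‖V x‖ₑ := by
  obtain ⟨hu, hV, hweak⟩ := h
  let b : ContDiffBump (0 : E2) := ⟨δ / 2, δ, by positivity, by linarith⟩
  set ψ : E2 → ℝ := b.normed volume with hψdef
  have hψc : ContDiff ℝ 1 ψ := b.contDiff_normed (n := 1)
  have hψs : HasCompactSupport ψ := b.hasCompactSupport_normed
  have hψ0 : ∀ x, 0 ≤ ψ x := b.nonneg_normed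
  have hψint : Integrable ψ volume := b.integrable_normed
  have hψ1 : ∫⁻ x, ‖ψ x‖ₑ = 1 := by
    rw [← ofReal_integral_norm_eq_lintegral_enorm hψint]
    simp_rw [Real.norm_of_nonneg (hψ0 _)]
    rw [b.integral_normed]; simp
  have hψx : ∀ x, ContDiff ℝ 1 fun y => ψ (x - y) := fun x =>
    hψc.comp (contDiff_const.sub contDiff_id)
  have hψxs : ∀ x, HasCompactSupport fun y => ψ (x - y) := fun x =>
    hψs.comp_homeomorph (Homeomorph.subLeft x)
  set w : E2 → ℝ := u ⋆[ContinuousLinearMap.lsmul ℝ ℝ, volume] ψ with hw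
  have hwx : ∀ x, w x = ∫ y, u y * ψ (x - y) := fun x => rfl
  have hwc : ContDiff ℝ 1 w :=
    hψs.contDiff_convolution_right (n := 1) _ hu.locallyIntegrable hψc
  have hint : ∀ x, Integrable (fun y => u y * ψ (x - y)) volume := by
    intro x
    obtain ⟨C, hC⟩ := hψs.exists_bound_of_continuous hψc.continuous
    exact hu.mul_bdd (c := C) (hψx x).continuous.aestronglyMeasurable
      (Filter.Eventually.of_forall fun y => hC _)
  have hder : ∀ x l, fderiv ℝ w x (EuclideanSpace.single l 1) = ∫ y, ψ (x - y) * V y l := by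
    intro x l
    have h1 := (hψs.hasFDerivAt_convolution_right (ContinuousLinearMap.lsmul ℝ ℝ)
      hu.locallyIntegrable hψc x).fderiv
    rw [show fderiv ℝ w x = _ from h1,
      convolution_precompR_apply _ hu.locallyIntegrable (hψs.fderiv (𝕜 := ℝ))
        (hψc.continuous_fderiv one_ne_zero)]
    have h2 := hweak _ (hψx x) (hψxs x) l
    have h3 : ∀ y, fderiv ℝ (fun y => ψ (x - y)) y (EuclideanSpace.single l 1)
        = - fderiv ℝ ψ (x - y) (EuclideanSpace.single l 1) := by
      intro y
      have h4 := (((hψc.differentiable one_ne_zero) (x - y)).hasFDerivAt.comp y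
        ((hasFDerivAt_id y).const_sub x)).fderiv
      rw [show fderiv ℝ (fun y => ψ (x - y)) y = _ from h4]
      simp
    simp only [h3, mul_neg, integral_neg, neg_inj] at h2
    rw [← h2]
    rfl
  refine ⟨w, hwc, ?_, ?_, ?_⟩
  · intro x hx
    have hone : ∫ y, ψ (x - y) = 1 := by
      rw [integral_sub_left_eq_self ψ volume x]; exact b.integral_normed
    rw [hwx, ← hone]
    refine integral_mono (hψint.comp_sub_left x) (hint x) fun y => ?_
    by_cases hy : y ∈ Metric.ball x δ
    · exact le_mul_of_one_le_left (hψ0 _) (hU y (hx hy))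
    · have : ψ (x - y) = 0 := by
        rw [← Function.notMem_support, hψdef, b.support_normed_eq]
        simpa [b, dist_eq_norm, norm_sub_rev] using hy
      simp [this]
  · rw [← lintegral_lintegral_mollify hψc.continuous hψ1 hu.1.enorm]
    refine lintegral_mono fun x => ?_
    rw [hwx]
    refine (enorm_integral_le_lintegral_enorm _).trans ?_
    simp [enorm_mul]
  · rw [← lintegral_lintegral_mollify hψc.continuous hψ1 hV.1.enorm,
      ← lintegral_const_mul' _ _ (by simp)]
    refine lintegral_mono fun x => (enorm_clm_le_sum _).trans ?_
    have : ∀ l, ‖fderiv ℝ w x (EuclideanSpace.single l 1)‖ₑ ≤ ∫⁻ y, ‖V y‖ₑ * ‖ψ (x - y)‖ₑ := by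
      intro l
      rw [hder]
      refine (enorm_integral_le_lintegral_enorm _).trans (lintegral_mono fun y => ?_)
      rw [enorm_mul, mul_comm]
      gcongr
      exact enorm_le_iff_norm_le.2 (PiLp.norm_apply_le (V y) l)
    rw [Fin.sum_univ_two, two_mul]
    exact add_le_add (this 0) (this 1)

/-- Lemma 3.4: for `p(x) := |x|`, the outer Lebesgue measure of `p(A)` satisfies
`L¹(p(A)) ≤ 10 capa₁(A)` for every `A ⊂ ℝ²`. -/
theorem polar_projection_le_capa (A : Set (EuclideanSpace ℝ (Fin 2))) :
    volume ((fun x : EuclideanSpace ℝ (Fin 2) => ‖x‖) '' A) ≤ 10 * capa1 A := by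
  unfold capa1
  simp only [ENNReal.mul_iInf_of_ne (by norm_num : (10 : ℝ≥0∞) ≠ 0) (by norm_num : (10 : ℝ≥0∞) ≠ ∞)]
  refine le_iInf fun u => le_iInf fun V => le_iInf fun h => le_iInf fun ⟨U, hUo, hAU, hU⟩ => ?_
  -- The points whose ball of radius `1 / (n + 1)` lies in `U` exhaust `U`.
  set K : ℕ → Set E2 := fun n => {x | Metric.ball x (1 / ((n : ℝ) + 1)) ⊆ U} with hK
  have hmono : Monotone fun n => (fun x : E2 => ‖x‖) '' K n := by
    intro m n hmn
    refine Set.image_mono fun x hx => ?_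
    exact (Metric.ball_subset_ball (Nat.one_div_le_one_div hmn)).trans hx
  have hcover : (fun x : E2 => ‖x‖) '' A ⊆ ⋃ n, (fun x : E2 => ‖x‖) '' K n := by
    rintro _ ⟨x, hx, rfl⟩
    obtain ⟨ε, hε, hball⟩ := Metric.isOpen_iff.1 hUo x (hAU hx)
    obtain ⟨n, hn⟩ := exists_nat_one_div_lt hε
    exact Set.mem_iUnion.2 ⟨n, x, (Metric.ball_subset_ball hn.le).trans hball, rfl⟩
  refine (measure_mono hcover).trans ?_
  rw [hmono.measure_iUnion]
  refine iSup_le fun n => ?_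
  obtain ⟨w, hw, hw1, hwu, hwV⟩ := exists_mollified h hU (Nat.one_div_pos_of_nat (α := ℝ) (n := n))
  refine (volume_norm_image_le_of_contDiff_euclidean hw fun x hx => hw1 x hx).trans ?_
  rw [lintegral_add_left hw.continuous.measurable.enorm]
  calc 3 * ((∫⁻ x, ‖w x‖ₑ) + ∫⁻ x, ‖fderiv ℝ w x‖ₑ)
      ≤ 3 * ((∫⁻ x, ‖u x‖ₑ) + 2 * ∫⁻ x, ‖V x‖ₑ) := by gcongr
    _ ≤ 3 * (2 * (∫⁻ x, ‖u x‖ₑ) + 2 * ∫⁻ x, ‖V x‖ₑ) := by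
        gcongr
        exact le_mul_of_one_le_left (zero_le) (by norm_num)
    _ = 6 * ((∫⁻ x, ‖u x‖ₑ) + ∫⁻ x, ‖V x‖ₑ) := by ring
    _ ≤ 10 * ((∫⁻ x, ‖u x‖ₑ) + ∫⁻ x, ‖V x‖ₑ) := by gcongr; norm_num
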